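/- Let 1 ≤ m ≤ n, let V = ℝ^{m+n}, let L be the block-diagonal matrix diag(J_m, J_n), and let g be the symmetric bilinear form on V whose matrix is block-diagonal diag(ε₁S_m, ε₂S_n) with ε₁, ε₂ ∈ {1, −1}. Then L is g-symmetric, g is nondegenerate, and the linear map R(X) = Σ_{j=0}^{n-1} L^{n-1-j} X L^{j}, restricted to g-skew-symmetric matrices X, has image exactly equal to 𝔤_L = {Y : Y is g-skew-symmetric and YL = LY}. In particular, 𝔤_L is a Berger algebra. -/

import Mathlib

open Matrix

/-- The `n × n` real nilpotent Jordan block: `(J n) i j = 1` if `j = i + 1`, else `0`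
(0-based indices). -/
def JordanBlock (n : ℕ) : Matrix (Fin n) (Fin n) ℝ :=
  Matrix.of fun i j => if (j : ℕ) = (i : ℕ) + 1 then 1 else 0

/-- The `n × n` antidiagonal matrix `S n` with ones on the antidiagonal
(0-based: `(S n) i j = 1` iff `i + j + 1 = n`). -/
def AntiDiag (n : ℕ) : Matrix (Fin n) (Fin n) ℝ :=
  Matrix.of fun i j => if (i : ℕ) + (j : ℕ) + 1 = n then 1 else 0

/-- A formal curvature tensor on `ι → ℝ` with values given by matrices:
an alternating bilinear map into `End(ι → ℝ) ≃` matrices, satisfying the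
Bianchi identity. -/
def IsFormalCurvatureMat {ι : Type*} [Fintype ι]
    (R : (ι → ℝ) → (ι → ℝ) → Matrix ι ι ℝ) : Prop :=
  (∀ u u' v : ι → ℝ, R (u + u') v = R u v + R u' v) ∧
  (∀ (c : ℝ) (u v : ι → ℝ), R (c • u) v = c • R u v) ∧
  (∀ u v v' : ι → ℝ, R u (v + v') = R u v + R u v') ∧
  (∀ (c : ℝ) (u v : ι → ℝ), R u (c • v) = c • R u v) ∧
  (∀ u : ι → ℝ, R u u = 0) ∧
  (∀ u v w : ι → ℝ, R u v *ᵥ w + R v w *ᵥ u + R w u *ᵥ v = 0)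

/-- A set `h` of matrices (viewed as endomorphisms of `ι → ℝ`) is a Berger algebra
if it is spanned, as a vector space, by the values of all formal curvature tensors
whose values lie in `h`. -/
def IsBergerMat {ι : Type*} [Fintype ι] (h : Set (Matrix ι ι ℝ)) : Prop :=
  (Submodule.span ℝ {A : Matrix ι ι ℝ |
      ∃ R, IsFormalCurvatureMat R ∧ (∀ u v, R u v ∈ h) ∧ ∃ u v, R u v = A} :
    Set (Matrix ι ι ℝ)) = h

/-!
Write `R` for `X ↦ ∑ L ^ (n - 1 - j) * X * L ^ j`. Since `[L, R X] = [L ^ n, X]`, nilpotency of `L`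
makes `R X` commute with `L`, and `R` preserves skewness by reversing the sum. For the converse let
`T` be the `g`-symmetric matrix unit in the lower left corner of the larger block: `R T` is the
projection `P` onto that block. A skew `Y` commuting with `L` has zero diagonal blocks, because the
commutant of a single Jordan block consists of polynomials in it, which are symmetric. Hence
`Y = Y * P + P * Y = R (Y * T + T * Y)`. Finally `(u, v) ↦ R (u ∧ v)` is a formal curvature tensor
for every `g`-symmetric `L`, and the `u ∧ v` span the skew matrices.
-/

section PowDeriv

variable {K A : Type*} [CommSemiring K] [Ring A] [Algebra K A]

/-- The derivative of `x ↦ x ^ n` at `L`, as a linear function of the direction `X`; this is the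
operator `R` of the theorem. -/
def powDeriv (K : Type*) {A : Type*} [CommSemiring K] [Ring A] [Algebra K A] (L : A) (n : ℕ) :
    A →ₗ[K] A :=
  ∑ j ∈ Finset.range n, LinearMap.mulRight K L ^ j * LinearMap.mulLeft K L ^ (n - 1 - j)

theorem powDeriv_apply (L : A) (n : ℕ) (X : A) :
    powDeriv K L n X = ∑ j ∈ Finset.range n, L ^ (n - 1 - j) * X * L ^ j := by
  simp [powDeriv, LinearMap.sum_apply, LinearMap.pow_mulLeft, LinearMap.pow_mulRight]

theorem mul_powDeriv_sub_powDeriv_mul (L : A) (n : ℕ) (X : A) :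
    L * powDeriv K L n X - powDeriv K L n X * L = L ^ n * X - X * L ^ n := by
  have h : (LinearMap.mulLeft K L - LinearMap.mulRight K L) * powDeriv K L n =
      LinearMap.mulLeft K L ^ n - LinearMap.mulRight K L ^ n :=
    (LinearMap.commute_mulLeft_right L L).symm.mul_neg_geom_sum₂ n
  simpa [LinearMap.pow_mulLeft, LinearMap.pow_mulRight] using LinearMap.congr_fun h X

theorem commute_powDeriv {L : A} {n : ℕ} (hL : L ^ n = 0) (X : A) :
    Commute (powDeriv K L n X) L := by
  have h := mul_powDeriv_sub_powDeriv_mul (K := K) L n X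
  rw [hL, zero_mul, mul_zero, sub_zero] at h
  exact (sub_eq_zero.mp h).symm

theorem powDeriv_mul_left {L Y : A} (h : Commute Y L) (n : ℕ) (T : A) :
    powDeriv K L n (Y * T) = Y * powDeriv K L n T := by
  simp only [powDeriv_apply, Finset.mul_sum, ← mul_assoc, (h.pow_right _).eq]

theorem powDeriv_mul_right {L Y : A} (h : Commute Y L) (n : ℕ) (T : A) :
    powDeriv K L n (T * Y) = powDeriv K L n T * Y := by
  simp only [powDeriv_apply, Finset.sum_mul, mul_assoc, (h.pow_right _).eq]

end PowDeriv

section AdjointPairs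

variable {K ι : Type*} [CommRing K] [Fintype ι] {G A A' B B' : Matrix ι ι K}

theorem isAdjointPair_iff_forall_dotProduct :
    G.IsAdjointPair G A A' ↔
      ∀ u v : ι → K, (A *ᵥ u) ⬝ᵥ (G *ᵥ v) = u ⬝ᵥ (G *ᵥ (A' *ᵥ v)) := by
  classical
  simp [← isAdjointPair_toLinearMap₂', LinearMap.IsAdjointPair, toLinearMap₂'_apply']

theorem isSkewAdjoint_iff_forall_dotProduct :
    G.IsSkewAdjoint A ↔
      ∀ u v : ι → K, (A *ᵥ u) ⬝ᵥ (G *ᵥ v) = - u ⬝ᵥ (G *ᵥ (A *ᵥ v)) := by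
  simp only [Matrix.IsSkewAdjoint, isAdjointPair_iff_forall_dotProduct, neg_mulVec, mulVec_neg,
    dotProduct_neg, neg_dotProduct]

theorem isAdjointPair_add (hA : G.IsAdjointPair G A A') (hB : G.IsAdjointPair G B B') :
    G.IsAdjointPair G (A + B) (A' + B') := by
  rw [Matrix.IsAdjointPair, transpose_add, add_mul, hA, hB, mul_add]

theorem isAdjointPair_mul (hA : G.IsAdjointPair G A A') (hB : G.IsAdjointPair G B B') :
    G.IsAdjointPair G (A * B) (B' * A') := by
  rw [Matrix.IsAdjointPair, transpose_mul, mul_assoc, hA, ← mul_assoc, hB, mul_assoc]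

theorem isAdjointPair_sum {κ : Type*} {s : Finset κ} {A A' : κ → Matrix ι ι K}
    (h : ∀ k ∈ s, G.IsAdjointPair G (A k) (A' k)) :
    G.IsAdjointPair G (∑ k ∈ s, A k) (∑ k ∈ s, A' k) := by
  rw [Matrix.IsAdjointPair, transpose_sum, Finset.sum_mul, Finset.mul_sum]
  exact Finset.sum_congr rfl h

theorem isAdjointPair_smul_form (c : K) (h : G.IsAdjointPair G A A') :
    (c • G).IsAdjointPair (c • G) A A' := by
  rw [Matrix.IsAdjointPair, Matrix.mul_smul, h, Matrix.smul_mul]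

theorem isSelfAdjoint_pow [DecidableEq ι] (h : G.IsSelfAdjoint A) (k : ℕ) :
    G.IsSelfAdjoint (A ^ k) := by
  induction k with
  | zero => simp [Matrix.IsSelfAdjoint, Matrix.IsAdjointPair]
  | succ k ih =>
    rw [pow_succ]
    simpa only [Matrix.IsSelfAdjoint, ← pow_succ, ← pow_succ'] using isAdjointPair_mul ih h

theorem isSymm_mul_of_isSelfAdjoint (hG : G.IsSymm) (h : G.IsSelfAdjoint A) :
    (G * A).IsSymm := by
  rw [Matrix.IsSymm, transpose_mul, hG.eq, h]

theorem isSkewAdjoint_anticommutator (hA : G.IsSkewAdjoint A) (hB : G.IsSelfAdjoint B) :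
    G.IsSkewAdjoint (A * B + B * A) := by
  have h := isAdjointPair_add (isAdjointPair_mul hA hB) (isAdjointPair_mul hB hA)
  rwa [mul_neg, neg_mul, ← neg_add, add_comm (B * A)] at h

theorem eq_zero_of_isSelfAdjoint_of_isSkewAdjoint [DecidableEq ι] [Invertible (2 : K)]
    (hG : IsUnit G) (hself : G.IsSelfAdjoint A) (hskew : G.IsSkewAdjoint A) : A = 0 := by
  have h : A = -A := hG.mul_left_cancel (hself.symm.trans hskew)
  have h2 : (2 : K) • A = 0 := by rw [two_smul]; nth_rw 1 [h]; exact neg_add_cancel A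
  simpa using congrArg ((⅟2 : K) • ·) h2

theorem isAdjointPair_powDeriv [DecidableEq ι] {L : Matrix ι ι K} (hL : G.IsSelfAdjoint L)
    (n : ℕ) (h : G.IsAdjointPair G A A') :
    G.IsAdjointPair G (powDeriv K L n A) (powDeriv K L n A') := by
  rw [powDeriv_apply, powDeriv_apply, ← Finset.sum_range_reflect _ n]
  refine isAdjointPair_sum fun j hj => ?_
  have hj' : n - 1 - (n - 1 - j) = j := by have := Finset.mem_range.mp hj; lia
  rw [hj', mul_assoc (L ^ (n - 1 - j))]
  exact isAdjointPair_mul (isAdjointPair_mul (isSelfAdjoint_pow hL _) h) (isSelfAdjoint_pow hL _)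

end AdjointPairs

section SkewCentralizer

variable {K ι : Type*} [CommRing K] [Fintype ι] [DecidableEq ι] {G L : Matrix ι ι K}

/-- The space `𝔤_L` of matrices that are skew with respect to the form with matrix `G` and commute
with `L`. -/
def skewCentralizer (G L : Matrix ι ι K) : Submodule K (Matrix ι ι K) :=
  skewAdjointMatricesSubmodule G ⊓ Subalgebra.toSubmodule (Subalgebra.centralizer K {L})

theorem mem_skewCentralizer {Y : Matrix ι ι K} :
    Y ∈ skewCentralizer G L ↔ G.IsSkewAdjoint Y ∧ Commute Y L := by
  simp [skewCentralizer, Subalgebra.mem_centralizer_iff, Commute, SemiconjBy, eq_comm]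

theorem coe_skewCentralizer (G L : Matrix ι ι K) :
    (skewCentralizer G L : Set (Matrix ι ι K)) =
      {Y | (∀ u v, (Y *ᵥ u) ⬝ᵥ (G *ᵥ v) = - u ⬝ᵥ (G *ᵥ (Y *ᵥ v))) ∧ Y * L = L * Y} := by
  ext Y
  exact mem_skewCentralizer.trans (and_congr_left' isSkewAdjoint_iff_forall_dotProduct)

theorem coe_map_powDeriv_skewAdjoint (G L : Matrix ι ι K) (n : ℕ) :
    ((skewAdjointMatricesSubmodule G).map (powDeriv K L n) : Set (Matrix ι ι K)) =
      {Y | ∃ X, (∀ u v, (X *ᵥ u) ⬝ᵥ (G *ᵥ v) = - u ⬝ᵥ (G *ᵥ (X *ᵥ v))) ∧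
        ∑ j ∈ Finset.range n, L ^ (n - 1 - j) * X * L ^ j = Y} := by
  ext Y
  simp only [← isSkewAdjoint_iff_forall_dotProduct, ← powDeriv_apply (K := K), Submodule.map_coe,
    Set.mem_image, SetLike.mem_coe, mem_skewAdjointMatricesSubmodule, Set.mem_ofPred_eq]

theorem map_powDeriv_skewAdjoint_le (hL : G.IsSelfAdjoint L) {n : ℕ} (hLn : L ^ n = 0) :
    (skewAdjointMatricesSubmodule G).map (powDeriv K L n) ≤ skewCentralizer G L := by
  rintro _ ⟨X, hX, rfl⟩
  have h := isAdjointPair_powDeriv hL n ((mem_skewAdjointMatricesSubmodule G X).mp hX)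
  rw [map_neg] at h
  exact mem_skewCentralizer.mpr ⟨h, commute_powDeriv hLn X⟩

theorem skewCentralizer_le_map_powDeriv {T : Matrix ι ι K} {n : ℕ} (hT : G.IsSelfAdjoint T)
    (h : ∀ Y ∈ skewCentralizer G L, Y * powDeriv K L n T + powDeriv K L n T * Y = Y) :
    skewCentralizer G L ≤ (skewAdjointMatricesSubmodule G).map (powDeriv K L n) := by
  intro Y hY
  obtain ⟨hskew, hcomm⟩ := mem_skewCentralizer.mp hY
  refine ⟨Y * T + T * Y, ?_, ?_⟩
  · exact (mem_skewAdjointMatricesSubmodule G _).mpr (isSkewAdjoint_anticommutator hskew hT)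
  · rw [map_add, powDeriv_mul_left hcomm, powDeriv_mul_right hcomm, h Y hY]

end SkewCentralizer

section Curvature

variable {K ι : Type*} [CommRing K] [Fintype ι]

/-- The linear extension of the wedge product: `v uᵀ` is sent to the endomorphism
`u ∧ v : w ↦ g(u, w) v - g(v, w) u`, where `g` is the form with matrix `G`. -/
def skewing (G : Matrix ι ι K) : Matrix ι ι K →ₗ[K] Matrix ι ι K where
  toFun A := (A - Aᵀ) * G
  map_add' A B := by rw [transpose_add, ← add_mul]; congr 1; abel
  map_smul' c A := by rw [transpose_smul, ← smul_sub, Matrix.smul_mul]; rfl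

theorem skewing_apply (G A : Matrix ι ι K) : skewing G A = (A - Aᵀ) * G := rfl

theorem skewing_vecMulVec_mulVec (G : Matrix ι ι K) (u v w : ι → K) :
    skewing G (vecMulVec v u) *ᵥ w = (u ⬝ᵥ (G *ᵥ w)) • v - (v ⬝ᵥ (G *ᵥ w)) • u := by
  simp only [skewing_apply, transpose_vecMulVec, ← mulVec_mulVec, sub_mulVec, vecMulVec_mulVec,
    op_smul_eq_smul]

theorem isSkewAdjoint_skewing {G : Matrix ι ι K} (hG : G.IsSymm) (A : Matrix ι ι K) :
    G.IsSkewAdjoint (skewing G A) := by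
  rw [Matrix.IsSkewAdjoint, Matrix.IsAdjointPair, skewing_apply, transpose_mul, transpose_sub,
    transpose_transpose, hG.eq, ← neg_mul, neg_sub, mul_assoc]

theorem dotProduct_mulVec_comm_of_isSymm {M : Matrix ι ι K} (hM : M.IsSymm) (u v : ι → K) :
    u ⬝ᵥ (M *ᵥ v) = v ⬝ᵥ (M *ᵥ u) := by
  rw [dotProduct_mulVec, ← mulVec_transpose, hM.eq, dotProduct_comm]

variable [DecidableEq ι]

theorem range_skewing [Invertible (2 : K)] {G : Matrix ι ι K} (hG : G.IsSymm) (hGu : IsUnit G) :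
    LinearMap.range (skewing G) = skewAdjointMatricesSubmodule G := by
  refine le_antisymm ?_ fun X hX => ?_
  · rintro _ ⟨A, rfl⟩
    exact (mem_skewAdjointMatricesSubmodule G _).mpr (isSkewAdjoint_skewing hG A)
  obtain ⟨H, hGH, hHG⟩ := isUnit_iff_exists.mp hGu
  have hHt : Hᵀ = H := by
    refine left_inv_eq_right_inv (a := G) ?_ hGH
    rw [← transpose_inj, transpose_mul, transpose_transpose, hG.eq, hGH, transpose_one]
  have hskew : Xᵀ * G = G * -X := (mem_skewAdjointMatricesSubmodule G X).mp hX
  have hXH : (X * H)ᵀ * G = -X := by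
    rw [transpose_mul, hHt, mul_assoc, hskew, ← mul_assoc, hHG, one_mul]
  refine ⟨(⅟2 : K) • (X * H), ?_⟩
  rw [map_smul, skewing_apply, sub_mul, hXH, mul_assoc, hHG, mul_one, sub_neg_eq_add,
    ← two_smul K X, smul_smul, invOf_mul_self, one_smul]

theorem span_vecMulVec_eq_top {K ι : Type*} [CommRing K] [Finite ι] :
    Submodule.span K {A : Matrix ι ι K | ∃ u v, vecMulVec v u = A} = ⊤ := by
  classical
  cases nonempty_fintype ι
  refine Submodule.eq_top_iff'.mpr fun A => ?_
  induction A using Matrix.induction_on' with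
  | h_zero => exact zero_mem _
  | h_add A B hA hB => exact add_mem hA hB
  | h_std_basis i j x =>
    rw [← mul_one x, ← smul_eq_mul, ← smul_single, single_eq_single_vecMulVec_single]
    exact Submodule.smul_mem _ x (Submodule.subset_span ⟨_, _, rfl⟩)

theorem powDeriv_skewing_bianchi {G L : Matrix ι ι K} (hG : G.IsSymm) (hL : G.IsSelfAdjoint L)
    (n : ℕ) (u v w : ι → K) :
    powDeriv K L n (skewing G (vecMulVec v u)) *ᵥ w +
      powDeriv K L n (skewing G (vecMulVec w v)) *ᵥ u +
      powDeriv K L n (skewing G (vecMulVec u w)) *ᵥ v = 0 := by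
  simp only [powDeriv_apply, sum_mulVec, ← Finset.sum_add_distrib]
  refine Finset.sum_eq_zero fun j _ => ?_
  have hsymm : ∀ x y : ι → K, x ⬝ᵥ (G *ᵥ (L ^ j *ᵥ y)) = y ⬝ᵥ (G *ᵥ (L ^ j *ᵥ x)) := fun x y => by
    simpa only [mulVec_mulVec] using dotProduct_mulVec_comm_of_isSymm
      (isSymm_mul_of_isSelfAdjoint hG (isSelfAdjoint_pow hL j)) x y
  simp only [← mulVec_mulVec, skewing_vecMulVec_mulVec, mulVec_sub, mulVec_smul]
  rw [hsymm v w, hsymm w u, hsymm v u]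
  abel

theorem isFormalCurvatureMat_powDeriv_skewing {G L : Matrix ι ι ℝ} (hG : G.IsSymm)
    (hL : G.IsSelfAdjoint L) (n : ℕ) :
    IsFormalCurvatureMat fun u v => powDeriv ℝ L n (skewing G (vecMulVec v u)) := by
  refine ⟨?_, ?_, ?_, ?_, ?_, powDeriv_skewing_bianchi hG hL n⟩
  · simp only [vecMulVec_add, map_add, implies_true]
  · simp only [vecMulVec_smul, map_smul, implies_true]
  · simp only [add_vecMulVec, map_add, implies_true]
  · simp only [smul_vecMulVec, map_smul, implies_true]
  · simp only [skewing_apply, transpose_vecMulVec, sub_self, zero_mul, map_zero, implies_true]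

theorem isBergerMat_map_powDeriv_skewAdjoint {G L : Matrix ι ι ℝ} (hG : G.IsSymm)
    (hGu : IsUnit G) (hL : G.IsSelfAdjoint L) (n : ℕ) :
    IsBergerMat ((skewAdjointMatricesSubmodule G).map (powDeriv ℝ L n) : Set (Matrix ι ι ℝ)) := by
  refine congrArg SetLike.coe (le_antisymm ?_ ?_)
  · rw [Submodule.span_le]
    rintro _ ⟨R, -, hR, u, v, rfl⟩
    exact hR u v
  · rw [← range_skewing hG hGu, LinearMap.range_eq_map, ← span_vecMulVec_eq_top,
      Submodule.map_span, Submodule.map_span]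
    refine Submodule.span_mono ?_
    rintro _ ⟨_, ⟨_, ⟨u, v, rfl⟩, rfl⟩, rfl⟩
    refine ⟨_, isFormalCurvatureMat_powDeriv_skewing hG hL n, fun x y => ?_, u, v, rfl⟩
    exact Submodule.subset_span ⟨_, ⟨_, ⟨x, y, rfl⟩, rfl⟩, rfl⟩

end Curvature

section JordanBlock

variable {n : ℕ}

theorem jordanBlock_pow_apply (k : ℕ) (i j : Fin n) :
    (JordanBlock n ^ k) i j = if (j : ℕ) = i + k then 1 else 0 := by
  induction k generalizing j with
  | zero => simp [one_apply, Fin.ext_iff, eq_comm]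
  | succ k ih =>
    rw [pow_succ, mul_apply]
    simp only [ih]
    simp only [JordanBlock, of_apply, ite_mul, one_mul, zero_mul]
    by_cases h : (i : ℕ) + k < n
    · rw [Finset.sum_eq_single ⟨i + k, h⟩] <;> grind
    · rw [if_neg (by lia)]
      exact Finset.sum_eq_zero fun b _ => if_neg (by lia)

theorem jordanBlock_pow_eq_zero {k : ℕ} (h : n ≤ k) : JordanBlock n ^ k = 0 := by
  ext i j
  rw [jordanBlock_pow_apply, if_neg (by lia), Matrix.zero_apply]

/-- `e₀ᵀ J ^ i = eᵢᵀ`, so a matrix commuting with `J` is determined by its first row. -/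
theorem eq_sum_smul_pow_of_commute_jordanBlock {A : Matrix (Fin n) (Fin n) ℝ}
    (hA : Commute A (JordanBlock n)) :
    A = ∑ k : Fin n, A ⟨0, k.pos⟩ k • JordanBlock n ^ (k : ℕ) := by
  ext i j
  have hrow : (JordanBlock n ^ (i : ℕ) * A) ⟨0, i.pos⟩ j = A i j := by
    simp [mul_apply, jordanBlock_pow_apply, ← Fin.ext_iff]
  rw [← hrow, ← (hA.pow_right _).eq, mul_apply, Matrix.sum_apply]
  simp [jordanBlock_pow_apply, add_comm]

theorem antiDiag_eq_permMatrix (n : ℕ) : AntiDiag n = Fin.revPerm.permMatrix ℝ := by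
  ext i j
  simp only [AntiDiag, of_apply, Equiv.Perm.permMatrix, PEquiv.toMatrix_apply,
    Equiv.toPEquiv_apply, Option.mem_some_iff, Fin.revPerm_apply, Fin.ext_iff, Fin.val_rev]
  congr 1
  grind

theorem isSymm_antiDiag (n : ℕ) : (AntiDiag n).IsSymm := by
  ext i j
  simp only [AntiDiag, transpose_apply, of_apply, add_comm (j : ℕ)]

theorem isUnit_smul_antiDiag (n : ℕ) {ε : ℝ} (hε : ε ≠ 0) : IsUnit (ε • AntiDiag n) := by
  rw [isUnit_iff_isUnit_det, antiDiag_eq_permMatrix, det_smul, det_permutation, isUnit_iff_ne_zero]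
  exact mul_ne_zero (pow_ne_zero _ hε) (Int.cast_ne_zero.mpr (Units.ne_zero _))

theorem isSelfAdjoint_antiDiag_iff {A : Matrix (Fin n) (Fin n) ℝ} :
    (AntiDiag n).IsSelfAdjoint A ↔ ∀ i j, A j.rev i = A i.rev j := by
  rw [Matrix.IsSelfAdjoint, Matrix.IsAdjointPair, antiDiag_eq_permMatrix,
    PEquiv.mul_toMatrix_toPEquiv, PEquiv.toMatrix_toPEquiv_mul, ← Matrix.ext_iff]
  simp

theorem isSelfAdjoint_antiDiag_jordanBlock (n : ℕ) :
    (AntiDiag n).IsSelfAdjoint (JordanBlock n) := by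
  rw [isSelfAdjoint_antiDiag_iff]
  intro i j
  simp only [JordanBlock, of_apply, Fin.val_rev]
  congr 1
  grind

theorem isSelfAdjoint_antiDiag_of_commute_jordanBlock {A : Matrix (Fin n) (Fin n) ℝ}
    (hA : Commute A (JordanBlock n)) : (AntiDiag n).IsSelfAdjoint A := by
  rw [← mem_selfAdjointMatricesSubmodule, eq_sum_smul_pow_of_commute_jordanBlock hA]
  refine Submodule.sum_mem _ fun k _ => Submodule.smul_mem _ _ ?_
  rw [mem_selfAdjointMatricesSubmodule]
  exact isSelfAdjoint_pow (isSelfAdjoint_antiDiag_jordanBlock n) k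

theorem skewCentralizer_antiDiag_jordanBlock (n : ℕ) {ε : ℝ} (hε : ε ≠ 0) :
    skewCentralizer (ε • AntiDiag n) (JordanBlock n) = ⊥ := by
  refine (Submodule.eq_bot_iff _).mpr fun A hA => ?_
  obtain ⟨hskew, hcomm⟩ := mem_skewCentralizer.mp hA
  exact eq_zero_of_isSelfAdjoint_of_isSkewAdjoint (isUnit_smul_antiDiag n hε)
    (isAdjointPair_smul_form ε (isSelfAdjoint_antiDiag_of_commute_jordanBlock hcomm)) hskew

theorem powDeriv_jordanBlock_single_last_zero (n : ℕ) :
    powDeriv ℝ (JordanBlock (n + 1)) (n + 1) (single (Fin.last n) 0 1) = 1 := by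
  have hterm : ∀ t : Fin (n + 1), JordanBlock (n + 1) ^ (n - t : ℕ) * single (Fin.last n) 0 1 *
      JordanBlock (n + 1) ^ (t : ℕ) = single t t 1 := fun t => by
    ext i j
    rw [single_eq_single_vecMulVec_single, mul_vecMulVec, vecMulVec_mul, vecMulVec_apply,
      mulVec_single_one, single_one_vecMul, col_apply, row_apply, jordanBlock_pow_apply,
      jordanBlock_pow_apply, single_apply]
    grind
  rw [powDeriv_apply, Finset.sum_range, add_tsub_cancel_right]
  simp only [hterm, ← diagonal_one]
  exact sum_single_eq_diagonal _

theorem exists_isSelfAdjoint_powDeriv_jordanBlock_eq_one (n : ℕ) :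
    ∃ T, (AntiDiag n).IsSelfAdjoint T ∧ powDeriv ℝ (JordanBlock n) n T = 1 := by
  cases n with
  | zero => exact ⟨0, Subsingleton.elim _ _, Subsingleton.elim _ _⟩
  | succ n =>
    refine ⟨single (Fin.last n) 0 1, ?_, powDeriv_jordanBlock_single_last_zero n⟩
    rw [isSelfAdjoint_antiDiag_iff]
    intro i j
    simp only [single_apply]
    grind

end JordanBlock

section TwoBlocks

variable {K ι κ : Type*} [CommRing K] [Fintype ι] [Fintype κ]
  {G₁ L₁ : Matrix ι ι K} {G₂ L₂ : Matrix κ κ K}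

theorem isAdjointPair_fromBlocks_iff {A A' : Matrix ι ι K} {B B' : Matrix ι κ K}
    {C C' : Matrix κ ι K} {D D' : Matrix κ κ K} :
    (fromBlocks G₁ 0 0 G₂).IsAdjointPair (fromBlocks G₁ 0 0 G₂)
        (fromBlocks A B C D) (fromBlocks A' B' C' D') ↔
      G₁.IsAdjointPair G₁ A A' ∧ G₁.IsAdjointPair G₂ C B' ∧
        G₂.IsAdjointPair G₁ B C' ∧ G₂.IsAdjointPair G₂ D D' := by
  simp [Matrix.IsAdjointPair, fromBlocks_transpose, fromBlocks_multiply, fromBlocks_inj]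

theorem isSelfAdjoint_fromBlocks_diagonal (h₁ : G₁.IsSelfAdjoint L₁)
    (h₂ : G₂.IsSelfAdjoint L₂) :
    (fromBlocks G₁ 0 0 G₂).IsSelfAdjoint (fromBlocks L₁ 0 0 L₂) :=
  isAdjointPair_fromBlocks_iff.mpr
    ⟨h₁, by simp [Matrix.IsAdjointPair], by simp [Matrix.IsAdjointPair], h₂⟩

variable [DecidableEq ι] [DecidableEq κ]

theorem diagonal_blocks_mem_skewCentralizer {A : Matrix ι ι K} {B : Matrix ι κ K}
    {C : Matrix κ ι K} {D : Matrix κ κ K}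
    (h : fromBlocks A B C D ∈ skewCentralizer (fromBlocks G₁ 0 0 G₂) (fromBlocks L₁ 0 0 L₂)) :
    A ∈ skewCentralizer G₁ L₁ ∧ D ∈ skewCentralizer G₂ L₂ := by
  obtain ⟨hskew, hcomm⟩ := mem_skewCentralizer.mp h
  rw [Matrix.IsSkewAdjoint, fromBlocks_neg, isAdjointPair_fromBlocks_iff] at hskew
  simp only [Commute, SemiconjBy, fromBlocks_multiply, fromBlocks_inj, Matrix.mul_zero,
    Matrix.zero_mul, add_zero, zero_add] at hcomm
  exact ⟨mem_skewCentralizer.mpr ⟨hskew.1, hcomm.1⟩,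
    mem_skewCentralizer.mpr ⟨hskew.2.2.2, hcomm.2.2.2⟩⟩

theorem powDeriv_fromBlocks_lower_right (n : ℕ) (T : Matrix κ κ K) :
    powDeriv K (fromBlocks L₁ 0 0 L₂) n (fromBlocks 0 0 0 T) =
      fromBlocks 0 0 0 (powDeriv K L₂ n T) := by
  simp only [powDeriv_apply, fromBlocks_diagonal_pow, fromBlocks_multiply, Matrix.mul_zero,
    Matrix.zero_mul, add_zero, zero_add]
  ext (i | i) (j | j) <;> simp [Matrix.sum_apply]

theorem map_powDeriv_skewAdjoint_fromBlocks {n : ℕ} {T : Matrix κ κ K}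
    (hL₁ : G₁.IsSelfAdjoint L₁) (hL₂ : G₂.IsSelfAdjoint L₂) (hn₁ : L₁ ^ n = 0) (hn₂ : L₂ ^ n = 0)
    (h₁ : skewCentralizer G₁ L₁ = ⊥) (h₂ : skewCentralizer G₂ L₂ = ⊥)
    (hT : G₂.IsSelfAdjoint T) (hT1 : powDeriv K L₂ n T = 1) :
    (skewAdjointMatricesSubmodule (fromBlocks G₁ 0 0 G₂)).map
        (powDeriv K (fromBlocks L₁ 0 0 L₂) n) =
      skewCentralizer (fromBlocks G₁ 0 0 G₂) (fromBlocks L₁ 0 0 L₂) := by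
  refine le_antisymm (map_powDeriv_skewAdjoint_le (isSelfAdjoint_fromBlocks_diagonal hL₁ hL₂) ?_)
    (skewCentralizer_le_map_powDeriv (T := fromBlocks 0 0 0 T)
      (isSelfAdjoint_fromBlocks_diagonal (by simp [Matrix.IsSelfAdjoint, Matrix.IsAdjointPair]) hT)
      fun Y hY => ?_)
  · rw [fromBlocks_diagonal_pow, hn₁, hn₂, fromBlocks_zero]
  · rw [← fromBlocks_toBlocks Y] at hY ⊢
    obtain ⟨hA, hD⟩ := diagonal_blocks_mem_skewCentralizer hY
    rw [h₁, Submodule.mem_bot] at hA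
    rw [h₂, Submodule.mem_bot] at hD
    simp [powDeriv_fromBlocks_lower_right, hT1, hA, hD, fromBlocks_multiply, fromBlocks_add]

end TwoBlocks

theorem stmt7_general {m n : ℕ} (hmn : m ≤ n) {ε₁ ε₂ : ℝ} (hε₁ : ε₁ ≠ 0) (hε₂ : ε₂ ≠ 0)
    {L G : Matrix (Fin m ⊕ Fin n) (Fin m ⊕ Fin n) ℝ}
    (hL : L = fromBlocks (JordanBlock m) 0 0 (JordanBlock n))
    (hG : G = fromBlocks (ε₁ • AntiDiag m) 0 0 (ε₂ • AntiDiag n)) :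
    G.IsSelfAdjoint L ∧ G.Nondegenerate ∧
      (skewAdjointMatricesSubmodule G).map (powDeriv ℝ L n) = skewCentralizer G L ∧
      IsBergerMat (skewCentralizer G L : Set (Matrix (Fin m ⊕ Fin n) (Fin m ⊕ Fin n) ℝ)) := by
  have hJ (k : ℕ) (ε : ℝ) : (ε • AntiDiag k).IsSelfAdjoint (JordanBlock k) :=
    isAdjointPair_smul_form ε (isSelfAdjoint_antiDiag_jordanBlock k)
  obtain ⟨T, hT, hT1⟩ := exists_isSelfAdjoint_powDeriv_jordanBlock_eq_one n
  have hself : G.IsSelfAdjoint L := by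
    rw [hG, hL]
    exact isSelfAdjoint_fromBlocks_diagonal (hJ m ε₁) (hJ n ε₂)
  have hsymm : G.IsSymm := by
    rw [hG]
    exact ((isSymm_antiDiag m).smul ε₁).fromBlocks (by simp) ((isSymm_antiDiag n).smul ε₂)
  have hunit : IsUnit G := by
    rw [hG, isUnit_fromBlocks_zero₂₁]
    exact ⟨isUnit_smul_antiDiag m hε₁, isUnit_smul_antiDiag n hε₂⟩
  have himage : (skewAdjointMatricesSubmodule G).map (powDeriv ℝ L n) = skewCentralizer G L := by
    rw [hG, hL]
    exact map_powDeriv_skewAdjoint_fromBlocks (hJ m ε₁) (hJ n ε₂) (jordanBlock_pow_eq_zero hmn)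
      (jordanBlock_pow_eq_zero le_rfl) (skewCentralizer_antiDiag_jordanBlock m hε₁)
      (skewCentralizer_antiDiag_jordanBlock n hε₂) (isAdjointPair_smul_form ε₂ hT) hT1
  refine ⟨hself, ?_, himage, himage ▸ isBergerMat_map_powDeriv_skewAdjoint hsymm hunit hself n⟩
  exact nondegenerate_of_det_ne_zero ((isUnit_iff_isUnit_det G).mp hunit).ne_zero

/-- For `1 ≤ m ≤ n`, `L = diag(J_m, J_n)` and
`g` the bilinear form with matrix `G = diag(ε₁ S_m, ε₂ S_n)`, `ε₁, ε₂ ∈ {1, -1}`: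
`L` is `g`-symmetric, `g` is nondegenerate, the map `R(X) = Σ_{j=0}^{n-1} L^{n-1-j} X L^j`
restricted to `g`-skew-symmetric matrices has image exactly
`𝔤_L = {Y : Y g-skew-symmetric, YL = LY}`, and `𝔤_L` is a Berger algebra. -/
theorem stmt7 (m n : ℕ) (hm : 1 ≤ m) (hmn : m ≤ n) (ε₁ ε₂ : ℝ)
    (hε₁ : ε₁ = 1 ∨ ε₁ = -1) (hε₂ : ε₂ = 1 ∨ ε₂ = -1)
    (L G : Matrix (Fin m ⊕ Fin n) (Fin m ⊕ Fin n) ℝ)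
    (hLdef : L = Matrix.fromBlocks (JordanBlock m) 0 0 (JordanBlock n))
    (hGdef : G = Matrix.fromBlocks (ε₁ • AntiDiag m) 0 0 (ε₂ • AntiDiag n)) :
    -- `L` is `g`-symmetric
    (∀ u v : Fin m ⊕ Fin n → ℝ, (L *ᵥ u) ⬝ᵥ (G *ᵥ v) = u ⬝ᵥ (G *ᵥ (L *ᵥ v))) ∧
    -- `g` is nondegenerate
    (∀ u : Fin m ⊕ Fin n → ℝ, (∀ v, u ⬝ᵥ (G *ᵥ v) = 0) → u = 0) ∧
    -- the image of `R` restricted to skew-symmetric matrices is exactly `𝔤_L`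
    ({Y : Matrix (Fin m ⊕ Fin n) (Fin m ⊕ Fin n) ℝ |
        ∃ X, (∀ u v, (X *ᵥ u) ⬝ᵥ (G *ᵥ v) = - u ⬝ᵥ (G *ᵥ (X *ᵥ v))) ∧
          (∑ j ∈ Finset.range n, L ^ (n - 1 - j) * X * L ^ j) = Y} =
      {Y : Matrix (Fin m ⊕ Fin n) (Fin m ⊕ Fin n) ℝ |
        (∀ u v, (Y *ᵥ u) ⬝ᵥ (G *ᵥ v) = - u ⬝ᵥ (G *ᵥ (Y *ᵥ v))) ∧ Y * L = L * Y}) ∧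
    -- in particular, `𝔤_L` is a Berger algebra
    IsBergerMat {Y : Matrix (Fin m ⊕ Fin n) (Fin m ⊕ Fin n) ℝ |
        (∀ u v, (Y *ᵥ u) ⬝ᵥ (G *ᵥ v) = - u ⬝ᵥ (G *ᵥ (Y *ᵥ v))) ∧ Y * L = L * Y} := by
  obtain ⟨hself, hnondeg, himage, hberger⟩ := stmt7_general hmn
    (show ε₁ ≠ 0 by grind) (show ε₂ ≠ 0 by grind) hLdef hGdef
  rw [← coe_map_powDeriv_skewAdjoint, ← coe_skewCentralizer]
  exact ⟨isAdjointPair_iff_forall_dotProduct.mp hself, fun _ => hnondeg.eq_zero_of_ortho,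
    SetLike.coe_set_eq.mpr himage, hberger⟩
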